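/- Let A be an n×n Hermitian complex matrix with p positive eigenvalues and q negative eigenvalues, counted with multiplicity, and let R be an isotropic subspace of A with dim R > min(p, q). Then R contains a nonzero vector x with A x = 0. -/

import Mathlib

open scoped Matrix

/-- The number of positive eigenvalues (with multiplicity) of a Hermitian matrix. -/
noncomputable def posEigCount {n : Type*} [Fintype n] [DecidableEq n]
    {A : Matrix n n ℂ} (hA : A.IsHermitian) : ℕ :=
  Fintype.card {i // 0 < hA.eigenvalues i}

/-- The number of negative eigenvalues (with multiplicity) of a Hermitian matrix. -/
noncomputable def negEigCount {n : Type*} [Fintype n] [DecidableEq n]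
    {A : Matrix n n ℂ} (hA : A.IsHermitian) : ℕ :=
  Fintype.card {i // hA.eigenvalues i < 0}

/-!
Write `A = A⁺ - A⁻` with `A⁺` and `A⁻` positive semidefinite of ranks `p` and `q`. If
`p < dim R`, some nonzero `x ∈ R` satisfies `A⁺ x = 0`, so `xᴴ A⁻ x = -xᴴ A x = 0`; as `A⁻` is
positive semidefinite, `A⁻ x = 0` and hence `A x = 0`. If `q < dim R`, apply this to `-A`.
-/

section NullVectors

open scoped MatrixOrder ComplexOrder

theorem exists_ne_zero_mulVec_eq_zero_of_rank_lt_finrank {K m n : Type*} [Field K] [Fintype n]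
    (P : Matrix m n K) (R : Submodule K (n → K)) (hdim : P.rank < Module.finrank K R) :
    ∃ x ∈ R, x ≠ 0 ∧ P *ᵥ x = 0 := by
  have hker : LinearMap.ker (P.mulVecLin.rangeRestrict ∘ₗ R.subtype) ≠ ⊥ :=
    LinearMap.ker_ne_bot_of_finrank_lt hdim
  obtain ⟨x, hPx, hx⟩ := Submodule.exists_mem_ne_zero_of_ne_bot hker
  exact ⟨x, x.2, by simpa using hx, congrArg Subtype.val (LinearMap.mem_ker.mp hPx)⟩

variable {𝕜 n : Type*} [RCLike 𝕜] [Fintype n]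

theorem exists_null_vector_sub_of_nonneg_of_rank_lt_finrank {P Q : Matrix n n 𝕜} (hQ : Q.PosSemidef)
    {R : Submodule 𝕜 (n → 𝕜)} (hR : ∀ x ∈ R, 0 ≤ star x ⬝ᵥ (P - Q) *ᵥ x)
    (hdim : P.rank < Module.finrank 𝕜 R) :
    ∃ x ∈ R, x ≠ 0 ∧ (P - Q) *ᵥ x = 0 := by
  obtain ⟨x, hxR, hx, hPx⟩ := exists_ne_zero_mulVec_eq_zero_of_rank_lt_finrank P R hdim
  have hQ_nonpos : star x ⬝ᵥ Q *ᵥ x ≤ 0 := by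
    simpa only [Matrix.sub_mulVec, hPx, zero_sub, dotProduct_neg, neg_nonneg] using hR x hxR
  have hQx : Q *ᵥ x = 0 :=
    (hQ.dotProduct_mulVec_zero_iff x).mp (hQ_nonpos.antisymm (hQ.dotProduct_mulVec_nonneg x))
  exact ⟨x, hxR, hx, by rw [Matrix.sub_mulVec, hPx, hQx, sub_zero]⟩

variable [DecidableEq n] {A : Matrix n n 𝕜}

theorem exists_null_vector_of_nonneg_of_rank_posPart_lt_finrank (hA : A.IsHermitian)
    {R : Submodule 𝕜 (n → 𝕜)} (hR : ∀ x ∈ R, 0 ≤ star x ⬝ᵥ A *ᵥ x)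
    (hdim : A⁺.rank < Module.finrank 𝕜 R) :
    ∃ x ∈ R, x ≠ 0 ∧ A *ᵥ x = 0 := by
  have hsub : A⁺ - A⁻ = A := CFC.posPart_sub_negPart A hA
  have hneg : A⁻.PosSemidef := Matrix.nonneg_iff_posSemidef.mp (CFC.negPart_nonneg A)
  rw [← hsub] at hR
  simpa only [hsub] using exists_null_vector_sub_of_nonneg_of_rank_lt_finrank hneg hR hdim

theorem exists_null_vector_of_nonpos_of_rank_negPart_lt_finrank (hA : A.IsHermitian)
    {R : Submodule 𝕜 (n → 𝕜)} (hR : ∀ x ∈ R, star x ⬝ᵥ A *ᵥ x ≤ 0)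
    (hdim : A⁻.rank < Module.finrank 𝕜 R) :
    ∃ x ∈ R, x ≠ 0 ∧ A *ᵥ x = 0 := by
  rw [← CFC.posPart_neg] at hdim
  simpa only [Matrix.neg_mulVec, neg_eq_zero] using
    exists_null_vector_of_nonneg_of_rank_posPart_lt_finrank hA.neg
      (by simpa only [Matrix.neg_mulVec, dotProduct_neg, neg_nonneg] using hR) hdim

theorem rank_cfc_eq_card (hA : A.IsHermitian) (f : ℝ → ℝ) :
    (cfc f A).rank = Fintype.card {i // f (hA.eigenvalues i) ≠ 0} := by
  rw [hA.cfc_eq, Matrix.IsHermitian.cfc, Unitary.conjStarAlgAut_apply, ← Unitary.coe_star,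
    Matrix.rank_mul_eq_left_of_isUnit_det _ _ (Matrix.UnitaryGroup.det_isUnit _),
    Matrix.rank_mul_eq_right_of_isUnit_det _ _ (Matrix.UnitaryGroup.det_isUnit _),
    Matrix.rank_diagonal]
  simp only [Function.comp_apply, ne_eq, RCLike.ofReal_eq_zero]

theorem rank_posPart_eq_card (hA : A.IsHermitian) :
    A⁺.rank = Fintype.card {i // 0 < hA.eigenvalues i} := by
  rw [CFC.posPart_def, cfcₙ_eq_cfc, rank_cfc_eq_card hA]
  simp only [ne_eq, posPart_eq_zero, not_le]

theorem rank_negPart_eq_card (hA : A.IsHermitian) :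
    A⁻.rank = Fintype.card {i // hA.eigenvalues i < 0} := by
  rw [CFC.negPart_def, cfcₙ_eq_cfc, rank_cfc_eq_card hA]
  simp only [ne_eq, negPart_eq_zero, not_le]

theorem isotropic_subspace_contains_null_vector_general (hA : A.IsHermitian)
    (R : Submodule 𝕜 (n → 𝕜)) (hR : ∀ x ∈ R, star x ⬝ᵥ A *ᵥ x = 0)
    (hdim : min (Fintype.card {i // 0 < hA.eigenvalues i})
      (Fintype.card {i // hA.eigenvalues i < 0}) < Module.finrank 𝕜 R) :
    ∃ x ∈ R, x ≠ 0 ∧ A *ᵥ x = 0 := by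
  rw [← rank_posPart_eq_card, ← rank_negPart_eq_card] at hdim
  rcases min_lt_iff.mp hdim with hpos | hneg
  · exact exists_null_vector_of_nonneg_of_rank_posPart_lt_finrank hA (fun x hx => (hR x hx).ge) hpos
  · exact exists_null_vector_of_nonpos_of_rank_negPart_lt_finrank hA (fun x hx => (hR x hx).le) hneg

end NullVectors

/-- If `R` is an isotropic subspace of a Hermitian matrix `A` with `p` positive and
`q` negative eigenvalues, and `dim R > min p q`, then `R` contains a nonzero null
vector of `A`. -/
theorem isotropic_subspace_contains_null_vector
    (n : ℕ) (A : Matrix (Fin n) (Fin n) ℂ) (hA : A.IsHermitian)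
    (p q : ℕ) (hp : posEigCount hA = p) (hq : negEigCount hA = q)
    (R : Submodule ℂ (Fin n → ℂ))
    (hR : ∀ x ∈ R, star x ⬝ᵥ A.mulVec x = 0)
    (hdim : min p q < Module.finrank ℂ R) :
    ∃ x ∈ R, x ≠ 0 ∧ A.mulVec x = 0 := by
  subst hp hq
  exact isotropic_subspace_contains_null_vector_general hA R hR hdim
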